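/- The achromatic arboricity of the complete graph K_7 equals 7. -/

import Mathlib

/-- A partition of the edge set of `G` into `k` nonempty forests (acyclic classes)
such that the union of any two distinct parts contains a cycle. -/
def IsCompleteForestPartition {V : Type*} (G : SimpleGraph V) (k : ℕ)
    (P : Fin k → Set (Sym2 V)) : Prop :=
  (∀ i, (P i).Nonempty) ∧
  (∀ i j, i ≠ j → Disjoint (P i) (P j)) ∧
  (⋃ i, P i) = G.edgeSet ∧
  (∀ i, (SimpleGraph.fromEdgeSet (P i)).IsAcyclic) ∧
  (∀ i j, i ≠ j → ¬ (SimpleGraph.fromEdgeSet (P i ∪ P j)).IsAcyclic)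

/-- The achromatic arboricity of `G`: the largest number of parts in a partition of
`E(G)` into forests such that the union of any two parts contains a cycle. -/
noncomputable def achromaticArboricity {V : Type*} (G : SimpleGraph V) : ℕ :=
  sSup {k | ∃ P : Fin k → Set (Sym2 V), IsCompleteForestPartition G k P}

/-!
For the upper bound, suppose there are `k ≥ 8` classes. A cycle in the union of the classes `i` and
`j` leaves some component of class `i` at two distinct vertices, so at least two edge ends of class
`j` lie on the support of class `i`. Counting edge ends of `K_7` on the support of a class shows
that every class has at least two edges, and as `3 * 8 > 21` at least three classes have exactly
two. Such a class is a matching or a cherry (a path with two edges). Two matchings of size two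
cover the same four vertices and every other class puts at least three edge ends there, which is
too many, so at most one class is a matching of size two. A cherry leaves no slack in the count:
every other class puts exactly two edge ends on its three vertices, and this rules out a second
cherry.

For the lower bound, take as classes the stars of arcs leaving each vertex of the Paley tournament
on `ZMod 7`: any two vertices have a common out-neighbour, with which they form a triangle.
-/

open Finset SimpleGraph

section Cycles

variable {V : Type*} {A B C : SimpleGraph V}

theorem exists_isCycles_le_sup (hB : B.IsAcyclic) (hAB : ¬ (A ⊔ B).IsAcyclic) :
    ∃ C ≤ A ⊔ B, C.IsCycles ∧ C ⊓ A ≠ ⊥ := by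
  obtain ⟨u, p, hp⟩ : ∃ (u : V) (p : (A ⊔ B).Walk u u), p.IsCycle := by
    simpa only [IsAcyclic, not_forall, not_not] using hAB
  refine ⟨p.toSubgraph.spanningCoe, p.toSubgraph.spanningCoe_le,
    hp.isCycles_spanningCoe_toSubgraph, fun hCA ↦ ?_⟩
  have hCB : p.toSubgraph.spanningCoe ≤ B :=
    Disjoint.left_le_of_le_sup_left p.toSubgraph.spanningCoe_le (disjoint_iff.mpr hCA)
  have hpB : ∀ e ∈ p.edges, e ∈ B.edgeSet := fun e he ↦
    edgeSet_mono hCB (by simpa using he)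
  exact hB _ (hp.transfer hpB)

theorem exists_ne_reachable_existsUnique_adj [Finite V] (hA : A.IsAcyclic) (hne : A ≠ ⊥) :
    ∃ x y, x ≠ y ∧ A.Reachable x y ∧ (∃! z, A.Adj x z) ∧ ∃! z, A.Adj y z := by
  classical
  have := Fintype.ofFinite V
  obtain ⟨v, w, hvw⟩ := ne_bot_iff_exists_adj.mp hne
  let T := A.connectedComponentMk v
  have hvT : v ∈ T := rfl
  have hwT : w ∈ T := (ConnectedComponent.sound hvw.reachable).symm
  have : Nontrivial T := ⟨⟨v, hvT⟩, ⟨w, hwT⟩, fun h ↦ hvw.ne (congrArg Subtype.val h)⟩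
  obtain ⟨x, y, hxy, hx, hy⟩ := (hA.isTree_connectedComponent T).exists_ne_and_degree_eq_one
  have unique_adj : ∀ z : T, T.toSimpleGraph.degree z = 1 → ∃! t, A.Adj z t := by
    intro z hz
    obtain ⟨t, hzt, ht⟩ := degree_eq_one_iff_existsUnique_adj.mp hz
    refine ⟨t, hzt, fun s hzs ↦ ?_⟩
    exact congrArg Subtype.val (ht ⟨s, T.mem_supp_of_adj_mem_supp z.2 hzs⟩ hzs)
  exact ⟨x, y, Subtype.coe_ne_coe.mpr hxy, T.reachable_of_mem_supp x.2 y.2,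
    unique_adj x hx, unique_adj y hy⟩

/-- Follow a component of the linear forest `C ⊓ A` to its two ends. -/
theorem exists_ne_reachable_mem_support_inf [Finite V] (hA : A.IsAcyclic) (hC : C.IsCycles)
    (hle : C ≤ A ⊔ B) (hCA : C ⊓ A ≠ ⊥) :
    ∃ x y, x ≠ y ∧ A.Reachable x y ∧ x ∈ (C ⊓ B).support ∧ y ∈ (C ⊓ B).support := by
  obtain ⟨x, y, hxy, hreach, hx, hy⟩ :=
    exists_ne_reachable_existsUnique_adj (hA.anti (inf_le_right : C ⊓ A ≤ A)) hCA
  have leaf_mem : ∀ z, (∃! t, (C ⊓ A).Adj z t) → z ∈ (C ⊓ B).support := by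
    rintro z ⟨t, hzt, ht⟩
    obtain ⟨s, hts, hzs⟩ := hC.other_adj_of_adj hzt.1
    exact ⟨s, hzs, (hle hzs).resolve_left fun hA ↦ hts (ht s ⟨hzs, hA⟩).symm⟩
  exact ⟨x, y, hxy, hreach.mono inf_le_right, leaf_mem x hx, leaf_mem y hy⟩

theorem not_adj_of_notMem_support {q b : V} (hC : C.IsCycles) (hle : C ≤ A ⊔ B)
    (hq : q ∉ A.support) (hunique : ∀ t, B.Adj q t → t = b) : ¬ C.Adj q b := by
  intro hqb
  obtain ⟨t, hbt, hqt⟩ := hC.other_adj_of_adj hqb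
  rcases hle hqt with hAqt | hBqt
  · exact hq ⟨t, hAqt⟩
  · exact hbt (hunique t hBqt).symm

end Cycles

section Degrees

variable {V : Type*} [Fintype V]

theorem card_le_sum_degree_support {A B : SimpleGraph V} [DecidableRel A.Adj] [DecidableRel B.Adj]
    {T : Finset V} (hT : ∀ v ∈ T, v ∈ A.support ∧ v ∈ B.support) :
    #T ≤ ∑ v ∈ A.support.toFinset, B.degree v :=
  calc #T = ∑ _v ∈ T, 1 := card_eq_sum_ones T
    _ ≤ ∑ v ∈ T, B.degree v :=
      sum_le_sum fun v hv ↦ (B.degree_pos_iff_mem_support v).mpr (hT v hv).2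
    _ ≤ ∑ v ∈ A.support.toFinset, B.degree v :=
      sum_le_sum_of_subset fun v hv ↦ Set.mem_toFinset.mpr (hT v hv).1

theorem card_support_le_two_mul_card_edgeFinset (A : SimpleGraph V) [DecidableRel A.Adj] :
    #A.support.toFinset ≤ 2 * #A.edgeFinset :=
  (card_le_sum_degree_support (by simp)).trans_eq A.sum_degrees_support_eq_twice_card_edges

theorem sum_degree_le_card_mul (G : SimpleGraph V) [DecidableRel G.Adj] (S : Finset V) :
    ∑ v ∈ S, G.degree v ≤ #S * (Fintype.card V - 1) :=
  sum_le_card_nsmul _ _ _ fun v _ ↦ Nat.le_sub_one_of_lt (degree_lt_card_verts v)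

end Degrees

theorem three_mul_card_le_sum_add_card {ι : Type*} [Fintype ι] {f : ι → ℕ} (hf : ∀ i, 2 ≤ f i) :
    3 * Fintype.card ι ≤ ∑ i, f i + #{i | f i = 2} := by
  have hle : ∀ i ∈ univ, 3 ≤ f i + if f i = 2 then 1 else 0 := fun i _ ↦ by
    have := hf i
    split_ifs <;> lia
  calc 3 * Fintype.card ι = ∑ _i : ι, 3 := by simp [mul_comm]
    _ ≤ ∑ i, (f i + if f i = 2 then 1 else 0) := sum_le_sum hle
    _ = ∑ i, f i + #{i | f i = 2} := by rw [sum_add_distrib, card_filter]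

section Matching

variable {V : Type*} {M : SimpleGraph V}

/-- A graph is a matching if no two of its edges share an endpoint. Unlike
`SimpleGraph.Subgraph.IsMatching`, this does not refer to an ambient graph, and isolated vertices
are allowed. -/
def IsMatchingGraph (M : SimpleGraph V) : Prop :=
  ∀ ⦃v x y⦄, M.Adj v x → M.Adj v y → x = y

theorem IsMatchingGraph.adj_of_reachable (hM : IsMatchingGraph M) {x y : V}
    (hreach : M.Reachable x y) (hne : x ≠ y) : M.Adj x y := by
  obtain ⟨p⟩ := hreach
  induction p with
  | nil => exact absurd rfl hne
  | @cons x z y hxz _ ih =>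
    obtain rfl | hzy := eq_or_ne z y
    · exact hxz
    · exact absurd (hM hxz.symm (ih hzy)) hne

theorem IsMatchingGraph.card_support [Fintype V] [DecidableRel M.Adj] (hM : IsMatchingGraph M) :
    #M.support.toFinset = 2 * #M.edgeFinset := by
  rw [← M.sum_degrees_support_eq_twice_card_edges, card_eq_sum_ones]
  refine sum_congr rfl fun v hv ↦ Eq.symm ?_
  obtain ⟨w, hvw⟩ := Set.mem_toFinset.mp hv
  exact degree_eq_one_iff_existsUnique_adj.mpr ⟨w, hvw, fun _ hvx ↦ hM hvx hvw⟩

end Matching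

section Cherry

variable {V : Type*} {A : SimpleGraph V} {a b c : V}

theorem sym2_mk_ne_mk_of_ne (hac : a ≠ c) : s(a, b) ≠ s(b, c) := by
  rwa [Sym2.eq_swap, ne_eq, Sym2.congr_right]

/-- `A` is a cherry with centre `b` and ends `a` and `c`: its only edges are `ab` and `bc`. -/
structure IsCherry (A : SimpleGraph V) (a b c : V) : Prop where
  ends_ne : a ≠ c
  edgeSet_eq : A.edgeSet = {s(a, b), s(b, c)}

namespace IsCherry

theorem symm (hA : IsCherry A a b c) : IsCherry A c b a where
  ends_ne := hA.ends_ne.symm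
  edgeSet_eq := by rw [hA.edgeSet_eq, Set.pair_comm, Sym2.eq_swap, Sym2.eq_swap (a := a)]

theorem adj_left (hA : IsCherry A a b c) : A.Adj a b := by
  simp [← mem_edgeSet, hA.edgeSet_eq]

theorem adj_right (hA : IsCherry A a b c) : A.Adj b c :=
  hA.symm.adj_left.symm

theorem adj_iff (hA : IsCherry A a b c) {x y : V} :
    A.Adj x y ↔ s(x, y) = s(a, b) ∨ s(x, y) = s(b, c) := by
  rw [← mem_edgeSet, hA.edgeSet_eq, Set.mem_insert_iff, Set.mem_singleton_iff]

theorem mem_support (hA : IsCherry A a b c) {v : V} :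
    v ∈ A.support ↔ v = a ∨ v = b ∨ v = c := by
  constructor
  · rintro ⟨w, hvw⟩
    have := hA.adj_iff.mp hvw
    grind
  · rintro (rfl | rfl | rfl)
    exacts [⟨_, hA.adj_left⟩, ⟨_, hA.adj_right⟩, ⟨_, hA.adj_right.symm⟩]

variable [Fintype V] [DecidableRel A.Adj]

theorem support_toFinset [DecidableEq V] (hA : IsCherry A a b c) :
    A.support.toFinset = {a, b, c} := by
  ext v
  simp [hA.mem_support]

theorem card_edgeFinset (hA : IsCherry A a b c) : #A.edgeFinset = 2 := by
  classical
  have hset : A.edgeFinset = {s(a, b), s(b, c)} := by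
    rw [← coe_inj, coe_edgeFinset, hA.edgeSet_eq, coe_pair]
  rw [hset, card_pair (sym2_mk_ne_mk_of_ne hA.ends_ne)]

theorem card_support (hA : IsCherry A a b c) : #A.support.toFinset = 3 := by
  classical
  rw [hA.support_toFinset]
  exact card_eq_three.mpr ⟨a, b, c, hA.adj_left.ne, hA.ends_ne, hA.adj_right.ne, rfl⟩

end IsCherry

theorem exists_isCherry_of_not_isMatchingGraph [Fintype V] [DecidableRel A.Adj]
    (hcard : #A.edgeFinset = 2) (hA : ¬ IsMatchingGraph A) : ∃ a b c, IsCherry A a b c := by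
  classical
  simp only [IsMatchingGraph, not_forall] at hA
  obtain ⟨b, a, c, hba, hbc, hac⟩ := hA
  refine ⟨a, b, c, hac, ?_⟩
  have hsub : {s(a, b), s(b, c)} ⊆ A.edgeFinset := by
    simp [insert_subset_iff, hba.symm, hbc]
  rw [← coe_edgeFinset, ← eq_of_subset_of_card_le hsub (by rw [hcard, card_pair
    (sym2_mk_ne_mk_of_ne hac)]), coe_pair]

end Cherry

/-- A decomposition of `G` into spanning subgraphs `H i` that are forests, any two of which have a
cycle in their union. This is `IsCompleteForestPartition` phrased with graphs in place of edge sets,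
over an arbitrary index type. -/
structure IsCompleteForestDecomposition {V ι : Type*} (G : SimpleGraph V)
    (H : ι → SimpleGraph V) : Prop where
  disjoint : Pairwise fun i j ↦ Disjoint (H i) (H j)
  iSup_eq : ⨆ i, H i = G
  isAcyclic : ∀ i, (H i).IsAcyclic
  not_isAcyclic_sup : Pairwise fun i j ↦ ¬ (H i ⊔ H j).IsAcyclic

theorem IsCompleteForestPartition.isCompleteForestDecomposition {V : Type*} {G : SimpleGraph V}
    {k : ℕ} {P : Fin k → Set (Sym2 V)} (hP : IsCompleteForestPartition G k P) :
    IsCompleteForestDecomposition G fun i ↦ fromEdgeSet (P i) := by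
  obtain ⟨-, hdisj, hunion, hacyc, hcyc⟩ := hP
  refine ⟨fun i j hij ↦ ?_, ?_, hacyc, fun i j hij ↦ ?_⟩
  · change Disjoint (fromEdgeSet (P i)) (fromEdgeSet (P j))
    rw [fromEdgeSet_disjoint, edgeSet_fromEdgeSet]
    exact (hdisj i j hij).mono_right Set.sdiff_subset
  · rw [← fromEdgeSet_iUnion, hunion, fromEdgeSet_edgeSet]
  · change ¬ (fromEdgeSet (P i) ⊔ fromEdgeSet (P j)).IsAcyclic
    rw [← fromEdgeSet_union]
    exact hcyc i j hij

namespace IsCompleteForestDecomposition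

section Counting

variable {V ι : Type*} {G : SimpleGraph V} {H : ι → SimpleGraph V} {i j : ι}

theorem exists_adj (h : IsCompleteForestDecomposition G H) {v w : V} (hvw : G.Adj v w) :
    ∃ i, (H i).Adj v w := by
  rwa [← h.iSup_eq, iSup_adj] at hvw

theorem index_eq_of_adj (h : IsCompleteForestDecomposition G H) {v w : V} (hi : (H i).Adj v w)
    (hj : (H j).Adj v w) : i = j :=
  by_contra fun hij ↦ SimpleGraph.disjoint_left.mp (h.disjoint hij) v w hi hj

theorem exists_isCycles [Finite V] (h : IsCompleteForestDecomposition G H) (hij : i ≠ j) :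
    ∃ C ≤ H i ⊔ H j, C.IsCycles ∧ ∃ x y, x ≠ y ∧ (H i).Reachable x y ∧
      x ∈ (C ⊓ H j).support ∧ y ∈ (C ⊓ H j).support := by
  obtain ⟨C, hle, hC, hCi⟩ := exists_isCycles_le_sup (h.isAcyclic j) (h.not_isAcyclic_sup hij)
  exact ⟨C, hle, hC, exists_ne_reachable_mem_support_inf (h.isAcyclic i) hC hle hCi⟩

theorem exists_ne_reachable_mem_support [Finite V] (h : IsCompleteForestDecomposition G H)
    (hij : i ≠ j) :
    ∃ x y, x ≠ y ∧ (H i).Reachable x y ∧ x ∈ (H j).support ∧ y ∈ (H j).support := by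
  obtain ⟨C, -, -, x, y, hxy, hreach, hx, hy⟩ := h.exists_isCycles hij
  exact ⟨x, y, hxy, hreach, support_mono inf_le_right hx, support_mono inf_le_right hy⟩

theorem exists_ne_mem_support [Finite V] (h : IsCompleteForestDecomposition G H) (hij : i ≠ j) :
    ∃ x y, x ≠ y ∧ (x ∈ (H i).support ∧ x ∈ (H j).support) ∧
      (y ∈ (H i).support ∧ y ∈ (H j).support) := by
  obtain ⟨x, y, hxy, hreach, hx, hy⟩ := h.exists_ne_reachable_mem_support hij
  exact ⟨x, y, hxy, ⟨mem_support_of_reachable hxy hreach, hx⟩,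
    mem_support_of_reachable hxy.symm hreach.symm, hy⟩

variable [Fintype V] [∀ i, DecidableRel (H i).Adj]

theorem two_le_sum_degree (h : IsCompleteForestDecomposition G H) (hij : i ≠ j) :
    2 ≤ ∑ v ∈ (H i).support.toFinset, (H j).degree v := by
  classical
  obtain ⟨x, y, hxy, hx, hy⟩ := h.exists_ne_mem_support hij
  rw [← card_pair hxy]
  exact card_le_sum_degree_support (by simp [hx, hy])

theorem adj_unique_of_sum_degree_eq_two (h : IsCompleteForestDecomposition G H) (hij : i ≠ j)
    (hsum : ∑ v ∈ (H i).support.toFinset, (H j).degree v = 2) {v s t : V}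
    (hv : v ∈ (H i).support) (hvs : (H j).Adj v s) (hvt : (H j).Adj v t) : s = t := by
  classical
  obtain ⟨z, hzv, hzi, hzj⟩ : ∃ z ≠ v, z ∈ (H i).support ∧ z ∈ (H j).support := by
    obtain ⟨x, y, hxy, hx, hy⟩ := h.exists_ne_mem_support hij
    by_cases hxv : x = v
    · exact ⟨y, hxv ▸ hxy.symm, hy⟩
    · exact ⟨x, hxv, hx⟩
  have hz : 0 < (H j).degree z := ((H j).degree_pos_iff_mem_support z).mpr hzj
  have hpair : (H j).degree z + (H j).degree v ≤ 2 :=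
    calc (H j).degree z + (H j).degree v = ∑ w ∈ {z, v}, (H j).degree w :=
        (sum_pair (f := fun w ↦ (H j).degree w) hzv).symm
      _ ≤ ∑ w ∈ (H i).support.toFinset, (H j).degree w :=
        sum_le_sum_of_subset <| insert_subset (Set.mem_toFinset.mpr hzi) <|
          singleton_subset_iff.mpr (Set.mem_toFinset.mpr hv)
      _ = 2 := hsum
  have hdeg : #((H j).neighborFinset v) ≤ 1 := by
    rw [card_neighborFinset_eq_degree]
    lia
  exact card_le_one.mp hdeg s (by simpa using hvs) t (by simpa using hvt)

/-- A cycle in `H i ⊔ H j` cannot use the edge `bq`, as it could not continue from `q`. So besides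
the two vertices at which it leaves a component of `H i`, also `b` is covered by both classes. -/
theorem three_le_sum_degree_of_isolated_edge (h : IsCompleteForestDecomposition G H) (hij : i ≠ j)
    {b q : V} (hbq : (H j).Adj b q) (unique_b : ∀ t, (H j).Adj b t → t = q)
    (unique_q : ∀ t, (H j).Adj q t → t = b) (hb : b ∈ (H i).support) (hq : q ∉ (H i).support) :
    3 ≤ ∑ v ∈ (H i).support.toFinset, (H j).degree v := by
  classical
  obtain ⟨C, hle, hC, x, y, hxy, hreach, hx, hy⟩ := h.exists_isCycles hij
  have ne_b : ∀ {z}, z ∈ (C ⊓ H j).support → b ≠ z := by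
    rintro z ⟨w, hCzw, hjzw⟩ rfl
    obtain rfl := unique_b w hjzw
    exact not_adj_of_notMem_support hC hle hq unique_q hCzw.symm
  have hcard : #{b, x, y} = 3 := card_eq_three.mpr ⟨b, x, y, ne_b hx, ne_b hy, hxy, rfl⟩
  rw [← hcard]
  refine card_le_sum_degree_support fun v hv ↦ ?_
  simp only [mem_insert, mem_singleton] at hv
  rcases hv with rfl | rfl | rfl
  exacts [⟨hb, ⟨q, hbq⟩⟩,
    ⟨mem_support_of_reachable hxy hreach, support_mono inf_le_right hx⟩,
    ⟨mem_support_of_reachable hxy.symm hreach.symm, support_mono inf_le_right hy⟩]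

variable [Fintype ι] [DecidableRel G.Adj]

theorem sum_degree (h : IsCompleteForestDecomposition G H) (v : V) :
    ∑ i, (H i).degree v = G.degree v := by
  classical
  have hunion : G.neighborFinset v = univ.biUnion fun i ↦ (H i).neighborFinset v := by
    ext w
    simp [← h.iSup_eq]
  simp only [← card_neighborFinset_eq_degree]
  rw [hunion, card_biUnion]
  refine fun i _ j _ hij ↦ disjoint_left.mpr fun w hi hj ↦ hij ?_
  exact h.index_eq_of_adj ((mem_neighborFinset ..).mp hi) ((mem_neighborFinset ..).mp hj)

theorem sum_sum_degree (h : IsCompleteForestDecomposition G H) (S : Finset V) :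
    ∑ i, ∑ v ∈ S, (H i).degree v = ∑ v ∈ S, G.degree v := by
  rw [sum_comm]
  exact sum_congr rfl fun v _ ↦ h.sum_degree v

theorem sum_card_edgeFinset (h : IsCompleteForestDecomposition G H) :
    ∑ i, #(H i).edgeFinset = #G.edgeFinset := by
  have := h.sum_sum_degree univ
  simp only [sum_degrees_eq_twice_card_edges, ← mul_sum] at this
  lia

theorem sum_degree_support [DecidableEq ι] (h : IsCompleteForestDecomposition G H) (i : ι) :
    ∑ v ∈ (H i).support.toFinset, G.degree v = 2 * #(H i).edgeFinset +
      ∑ j ∈ univ.erase i, ∑ v ∈ (H i).support.toFinset, (H j).degree v := by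
  rw [← h.sum_sum_degree, ← add_sum_erase _ _ (mem_univ i),
    sum_degrees_support_eq_twice_card_edges]

theorem two_mul_card_edgeFinset_add_le (h : IsCompleteForestDecomposition G H) (i : ι) :
    2 * #(H i).edgeFinset + 2 * Fintype.card ι ≤
      ∑ v ∈ (H i).support.toFinset, G.degree v + 2 := by
  classical
  have hothers : #(univ.erase i) * 2 ≤
      ∑ j ∈ univ.erase i, ∑ v ∈ (H i).support.toFinset, (H j).degree v :=
    card_nsmul_le_sum _ _ _ fun j hj ↦ h.two_le_sum_degree (ne_of_mem_erase hj).symm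
  have hcard := card_erase_add_one (mem_univ i)
  rw [card_univ] at hcard
  rw [h.sum_degree_support i]
  lia

theorem sum_degree_support_eq_two (h : IsCompleteForestDecomposition G H)
    (htight : ∑ v ∈ (H i).support.toFinset, G.degree v + 2 ≤
      2 * #(H i).edgeFinset + 2 * Fintype.card ι) (hij : i ≠ j) :
    ∑ v ∈ (H i).support.toFinset, (H j).degree v = 2 := by
  classical
  have htwo : ∀ l ∈ univ.erase i, 2 ≤ ∑ v ∈ (H i).support.toFinset, (H l).degree v :=
    fun l hl ↦ h.two_le_sum_degree (ne_of_mem_erase hl).symm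
  have hcard := card_erase_add_one (mem_univ i)
  rw [card_univ] at hcard
  rw [h.sum_degree_support i] at htight
  refine ((sum_eq_sum_iff_of_le htwo).mp ((sum_le_sum htwo).antisymm ?_) j
    (mem_erase.mpr ⟨hij.symm, mem_univ j⟩)).symm
  rw [sum_const, smul_eq_mul]
  lia

end Counting

section TwoEdges

variable {V ι : Type*} [Fintype V] [Fintype ι] [Nontrivial ι] {G : SimpleGraph V}
  {H : ι → SimpleGraph V} [∀ i, DecidableRel (H i).Adj]

theorem two_le_card_edgeFinset (h : IsCompleteForestDecomposition G H)
    (hV : Fintype.card V ≤ Fintype.card ι) (i : ι) : 2 ≤ #(H i).edgeFinset := by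
  classical
  have hupper := sum_degree_le_card_mul G (H i).support.toFinset
  have hlower := h.two_mul_card_edgeFinset_add_le i
  have hsupp := card_support_le_two_mul_card_edgeFinset (H i)
  have hι := Fintype.one_lt_card (α := ι)
  by_contra! hlt
  have := hupper.trans (Nat.mul_le_mul_right _ hsupp)
  interval_cases #(H i).edgeFinset <;> lia

theorem three_mul_card_le_card_edgeFinset_add [DecidableRel G.Adj]
    (h : IsCompleteForestDecomposition G H) (hV : Fintype.card V ≤ Fintype.card ι) :
    3 * Fintype.card ι ≤ #G.edgeFinset + #{i | #(H i).edgeFinset = 2} := by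
  rw [← h.sum_card_edgeFinset]
  exact three_mul_card_le_sum_add_card (h.two_le_card_edgeFinset hV)

end TwoEdges

section Matchings

variable {V ι : Type*} {G : SimpleGraph V} {H : ι → SimpleGraph V} {i j l : ι}

theorem exists_adj_mem_support [Finite V] (h : IsCompleteForestDecomposition G H) (hij : i ≠ j)
    (hi : IsMatchingGraph (H i)) :
    ∃ x y, (H i).Adj x y ∧ x ∈ (H j).support ∧ y ∈ (H j).support := by
  obtain ⟨x, y, hxy, hreach, hx, hy⟩ := h.exists_ne_reachable_mem_support hij
  exact ⟨x, y, hi.adj_of_reachable hreach hxy, hx, hy⟩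

variable [Fintype V] [∀ i, DecidableRel (H i).Adj]

/-- A cycle in the union of two matchings alternates between them, so both cover all its vertices,
of which there are at least four. -/
theorem four_le_card_inter_support [DecidableEq V] (h : IsCompleteForestDecomposition G H)
    (hij : i ≠ j) (hi : IsMatchingGraph (H i)) (hj : IsMatchingGraph (H j)) :
    4 ≤ #((H i).support.toFinset ∩ (H j).support.toFinset) := by
  obtain ⟨C, hle, hC, x, y, hxy, hreach, ⟨x', hCx, hjx⟩, ⟨y', hCy, hjy⟩⟩ := h.exists_isCycles hij
  have hixy : (H i).Adj x y := hi.adj_of_reachable hreach hxy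
  have mem_support_left : ∀ {v w}, C.Adj v w → (H j).Adj v w → v ∈ (H i).support := by
    intro v w hCvw hjvw
    obtain ⟨u, hwu, hCvu⟩ := hC.other_adj_of_adj hCvw
    exact ⟨u, (hle hCvu).resolve_right fun hjvu ↦ hwu (hj hjvw hjvu)⟩
  have hx'y : x' ≠ y := fun e ↦ hij (h.index_eq_of_adj hixy (e ▸ hjx))
  have hy'x : y' ≠ x := fun e ↦ hij (h.index_eq_of_adj hixy.symm (e ▸ hjy))
  have hx'y' : x' ≠ y' := fun e ↦ hxy (hj hjx.symm (e ▸ hjy.symm))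
  have hcard : #{x, y, x', y'} = 4 :=
    card_eq_four.mpr ⟨x, y, x', y', hxy, hjx.ne, hy'x.symm, hx'y.symm, hjy.ne, hx'y', rfl⟩
  rw [← hcard]
  refine card_le_card fun v hv ↦ ?_
  simp only [mem_insert, mem_singleton] at hv
  simp only [mem_inter, Set.mem_toFinset]
  rcases hv with rfl | rfl | rfl | rfl
  exacts [⟨⟨_, hixy⟩, ⟨_, hjx⟩⟩, ⟨⟨_, hixy.symm⟩, ⟨_, hjy⟩⟩,
    ⟨mem_support_left hCx.symm hjx.symm, ⟨_, hjx.symm⟩⟩,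
    ⟨mem_support_left hCy.symm hjy.symm, ⟨_, hjy.symm⟩⟩]

theorem support_eq_support_of_isMatchingGraph (h : IsCompleteForestDecomposition G H)
    (hij : i ≠ j) (hi : IsMatchingGraph (H i)) (hj : IsMatchingGraph (H j))
    (hci : #(H i).edgeFinset = 2) (hcj : #(H j).edgeFinset = 2) :
    (H i).support.toFinset = (H j).support.toFinset := by
  classical
  have hfour := h.four_le_card_inter_support hij hi hj
  have hsi := hi.card_support
  have hsj := hj.card_support
  calc (H i).support.toFinset
      = (H i).support.toFinset ∩ (H j).support.toFinset :=
        (eq_of_subset_of_card_le inter_subset_left (by lia)).symm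
    _ = (H j).support.toFinset := eq_of_subset_of_card_le inter_subset_right (by lia)

theorem three_le_sum_degree_of_isMatchingGraph (h : IsCompleteForestDecomposition G H)
    (hij : i ≠ j) (hil : i ≠ l) (hjl : j ≠ l) (hi : IsMatchingGraph (H i))
    (hj : IsMatchingGraph (H j)) (hsupp : (H i).support.toFinset = (H j).support.toFinset) :
    3 ≤ ∑ v ∈ (H i).support.toFinset, (H l).degree v := by
  classical
  obtain ⟨x, y, hxy, hx, hy⟩ := h.exists_adj_mem_support hil hi
  obtain ⟨x', y', hxy', hx', hy'⟩ := h.exists_adj_mem_support hjl hj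
  have hne : s(x, y) ≠ s(x', y') := fun e ↦ hij <| h.index_eq_of_adj hxy <| by
    rwa [← mem_edgeSet, e]
  have hcard : 3 ≤ #{x, y, x', y'} := by
    have := hxy.ne
    have := hxy'.ne
    grind
  have mem_support : ∀ {v w}, (H j).Adj v w → v ∈ (H i).support := by
    intro v w hvw
    rw [← Set.mem_toFinset, hsupp, Set.mem_toFinset]
    exact ⟨w, hvw⟩
  refine hcard.trans (card_le_sum_degree_support fun v hv ↦ ?_)
  simp only [mem_insert, mem_singleton] at hv
  rcases hv with rfl | rfl | rfl | rfl
  exacts [⟨⟨_, hxy⟩, hx⟩, ⟨⟨_, hxy.symm⟩, hy⟩, ⟨mem_support hxy', hx'⟩,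
    ⟨mem_support hxy'.symm, hy'⟩]

theorem three_mul_card_add_two_le_of_isMatchingGraph [Fintype ι] [DecidableRel G.Adj]
    (h : IsCompleteForestDecomposition G H) (hij : i ≠ j) (hi : IsMatchingGraph (H i))
    (hj : IsMatchingGraph (H j)) (hci : #(H i).edgeFinset = 2) (hcj : #(H j).edgeFinset = 2) :
    3 * Fintype.card ι + 2 ≤ ∑ v ∈ (H i).support.toFinset, G.degree v := by
  classical
  have hsupp := h.support_eq_support_of_isMatchingGraph hij hi hj hci hcj
  have hfour_i : ∑ v ∈ (H i).support.toFinset, (H i).degree v = 4 := by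
    rw [sum_degrees_support_eq_twice_card_edges, hci]
  have hfour_j : ∑ v ∈ (H i).support.toFinset, (H j).degree v = 4 := by
    rw [hsupp, sum_degrees_support_eq_twice_card_edges, hcj]
  have hle : ∀ l ∈ univ, 3 + ((if l = i then 1 else 0) + (if l = j then 1 else 0)) ≤
      ∑ v ∈ (H i).support.toFinset, (H l).degree v := by
    intro l _
    obtain rfl | hli := eq_or_ne l i
    · simp [hfour_i, hij]
    obtain rfl | hlj := eq_or_ne l j
    · simp [hfour_j, hli]
    simpa [hli, hlj] using
      h.three_le_sum_degree_of_isMatchingGraph hij hli.symm hlj.symm hi hj hsupp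
  calc 3 * Fintype.card ι + 2
      = ∑ l, (3 + ((if l = i then 1 else 0) + (if l = j then 1 else 0))) := by
        simp [sum_add_distrib, mul_comm]
    _ ≤ ∑ l, ∑ v ∈ (H i).support.toFinset, (H l).degree v := sum_le_sum hle
    _ = ∑ v ∈ (H i).support.toFinset, G.degree v := h.sum_sum_degree _

end Matchings

section Cherries

variable {V ι : Type*} [Fintype V] [Fintype ι] {G : SimpleGraph V} {H : ι → SimpleGraph V}
  {i j : ι} {a b c p q r : V}

theorem sum_degree_support_eq_two_of_isCherry [∀ i, DecidableRel (H i).Adj]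
    (h : IsCompleteForestDecomposition G H)
    (hk : 3 * Fintype.card V ≤ 2 * Fintype.card ι + 5) (hij : i ≠ j) (hi : IsCherry (H i) a b c) :
    ∑ v ∈ (H i).support.toFinset, (H j).degree v = 2 := by
  classical
  refine h.sum_degree_support_eq_two ?_ hij
  have : 0 < Fintype.card V := Fintype.card_pos_iff.mpr ⟨a⟩
  have hdeg := sum_degree_le_card_mul G (H i).support.toFinset
  rw [hi.card_support] at hdeg
  rw [hi.card_edgeFinset]
  lia

theorem centre_notMem_support_of_isCherry (h : IsCompleteForestDecomposition G H)
    (hk : 3 * Fintype.card V ≤ 2 * Fintype.card ι + 5) (hij : i ≠ j) (hi : IsCherry (H i) a b c)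
    (hj : IsCherry (H j) p q r) : q ∉ (H i).support := by
  classical
  have hsum := h.sum_degree_support_eq_two_of_isCherry hk hij hi
  exact fun hq ↦ hj.ends_ne <|
    h.adj_unique_of_sum_degree_eq_two hij hsum hq hj.adj_left.symm hj.adj_right

end Cherries

section Complete

variable {V ι : Type*} [Fintype V] [Fintype ι] {H : ι → SimpleGraph V} {i j : ι} {a b c p q r : V}

theorem not_isCherry_of_isCherry_same_ends
    (h : IsCompleteForestDecomposition (⊤ : SimpleGraph V) H)
    (hk : 3 * Fintype.card V ≤ 2 * Fintype.card ι + 5) (hij : i ≠ j) (hi : IsCherry (H i) a b c) :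
    ¬ IsCherry (H j) a q c := by
  classical
  intro hj
  have hbq : b ≠ q := fun e ↦ hij (h.index_eq_of_adj hi.adj_left (e ▸ hj.adj_left))
  have hb : b ∉ (H j).support := by
    simp [hj.mem_support, hi.adj_left.ne', hi.adj_right.ne, hbq]
  have hq : q ∉ (H i).support := by
    simp [hi.mem_support, hj.adj_left.ne', hj.adj_right.ne, hbq.symm]
  obtain ⟨l, hl⟩ := h.exists_adj ((top_adj b q).mpr hbq)
  have hil : i ≠ l := by
    rintro rfl
    exact hq ⟨b, hl.symm⟩
  have hjl : j ≠ l := by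
    rintro rfl
    exact hb ⟨q, hl⟩
  have hsum := h.sum_degree_support_eq_two_of_isCherry hk hil hi
  have unique_b : ∀ t, (H l).Adj b t → t = q := fun _ hbt ↦
    h.adj_unique_of_sum_degree_eq_two hil hsum ⟨c, hi.adj_right⟩ hbt hl
  have unique_q : ∀ t, (H l).Adj q t → t = b := fun _ hqt ↦
    h.adj_unique_of_sum_degree_eq_two hjl (h.sum_degree_support_eq_two_of_isCherry hk hjl hj)
      ⟨c, hj.adj_right⟩ hqt hl.symm
  have hthree :=
    h.three_le_sum_degree_of_isolated_edge hil hl unique_b unique_q ⟨c, hi.adj_right⟩ hq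
  lia

theorem index_eq_of_isCherry (h : IsCompleteForestDecomposition (⊤ : SimpleGraph V) H)
    (hk : 3 * Fintype.card V ≤ 2 * Fintype.card ι + 5) (hi : IsCherry (H i) a b c)
    (hj : IsCherry (H j) p q r) : i = j := by
  by_contra hij
  have hq := h.centre_notMem_support_of_isCherry hk hij hi hj
  have hb := h.centre_notMem_support_of_isCherry hk (Ne.symm hij) hj hi
  have same_ends : p = a ∧ r = c ∨ r = a ∧ p = c := by
    obtain ⟨x, y, hxy, hx, hy⟩ := h.exists_ne_mem_support hij
    simp only [hi.mem_support, hj.mem_support] at hx hy hq hb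
    grind
  rcases same_ends with ⟨rfl, rfl⟩ | ⟨rfl, rfl⟩
  · exact h.not_isCherry_of_isCherry_same_ends hk hij hi hj
  · exact h.not_isCherry_of_isCherry_same_ends hk hij hi hj.symm

theorem card_le_seven (h : IsCompleteForestDecomposition (⊤ : SimpleGraph V) H)
    (hV : Fintype.card V = 7) : Fintype.card ι ≤ 7 := by
  classical
  by_contra! hι
  have hk : 3 * Fintype.card V ≤ 2 * Fintype.card ι + 5 := by lia
  have : Nontrivial ι := Fintype.one_lt_card_iff_nontrivial.mp (by lia)
  let D : Finset ι := {i | #(H i).edgeFinset = 2}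
  have three_le_card : 3 ≤ #D := by
    have hedges : #(⊤ : SimpleGraph V).edgeFinset = 21 := by
      rw [card_edgeFinset_top_eq_card_choose_two, hV]
      rfl
    have := h.three_mul_card_le_card_edgeFinset_add (by lia)
    lia
  have card_matchings : #{i ∈ D | IsMatchingGraph (H i)} ≤ 1 := by
    refine card_le_one.mpr fun i hi j hj ↦ by_contra fun hij ↦ ?_
    obtain ⟨hci, hmi⟩ := by simpa only [D, mem_filter, mem_univ, true_and] using hi
    obtain ⟨hcj, hmj⟩ := by simpa only [D, mem_filter, mem_univ, true_and] using hj
    have := h.three_mul_card_add_two_le_of_isMatchingGraph hij hmi hmj hci hcj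
    have hdeg := sum_degree_le_card_mul ⊤ (H i).support.toFinset
    rw [hmi.card_support, hci, hV] at hdeg
    lia
  have card_cherries : #{i ∈ D | ¬ IsMatchingGraph (H i)} ≤ 1 := by
    refine card_le_one.mpr fun i hi j hj ↦ ?_
    obtain ⟨hci, hmi⟩ := by simpa only [D, mem_filter, mem_univ, true_and] using hi
    obtain ⟨hcj, hmj⟩ := by simpa only [D, mem_filter, mem_univ, true_and] using hj
    obtain ⟨a, b, c, hi'⟩ := exists_isCherry_of_not_isMatchingGraph hci hmi
    obtain ⟨p, q, r, hj'⟩ := exists_isCherry_of_not_isMatchingGraph hcj hmj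
    exact h.index_eq_of_isCherry hk hi' hj'
  have := card_filter_add_card_filter_not (s := D) fun i ↦ IsMatchingGraph (H i)
  lia

end Complete

end IsCompleteForestDecomposition

section OutStars

variable {k : ℕ}

/-- The star of edges leaving the vertex `i` in the tournament `T`, where `T i j` stands for
an arc from `i` to `j`. -/
def outStar (T : Fin k → Fin k → Prop) (i : Fin k) : Set (Sym2 (Fin k)) :=
  {e | ∃ j, T i j ∧ e = s(i, j)}

variable {T : Fin k → Fin k → Prop}

theorem isAcyclic_fromEdgeSet_outStar (i : Fin k) : (fromEdgeSet (outStar T i)).IsAcyclic := by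
  refine (isAcyclic_starGraph i).anti fun v w hvw ↦ ?_
  obtain ⟨⟨j, -, hj⟩, hne⟩ := (fromEdgeSet_adj _).mp hvw
  rw [starGraph_adj]
  grind

theorem not_isAcyclic_fromEdgeSet_outStar_union (hasymm : ∀ i j, T i j → ¬ T j i)
    (htotal : ∀ i j, i ≠ j → T i j ∨ T j i) (hcommon : ∀ i j, ∃ r, T i r ∧ T j r) {i j : Fin k}
    (hij : i ≠ j) : ¬ (fromEdgeSet (outStar T i ∪ outStar T j)).IsAcyclic := by
  obtain ⟨r, hir, hjr⟩ := hcommon i j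
  have ne_of_arc : ∀ {v w}, T v w → v ≠ w := by
    rintro v _ hvv rfl
    exact hasymm v v hvv hvv
  have htriangle : (fromEdgeSet (outStar T i ∪ outStar T j)).IsNClique 3 {i, j, r} := by
    simp only [is3Clique_triple_iff, fromEdgeSet_adj]
    refine ⟨⟨?_, hij⟩, ⟨.inl ⟨r, hir, rfl⟩, ne_of_arc hir⟩, ⟨.inr ⟨r, hjr, rfl⟩, ne_of_arc hjr⟩⟩
    exact (htotal i j hij).imp (⟨j, ·, rfl⟩) (⟨i, ·, Sym2.eq_swap⟩)
  exact fun hacyc ↦ hacyc.cliqueFree le_rfl _ htriangle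

theorem isCompleteForestPartition_outStar (hasymm : ∀ i j, T i j → ¬ T j i)
    (htotal : ∀ i j, i ≠ j → T i j ∨ T j i) (hcommon : ∀ i j, ∃ r, T i r ∧ T j r) :
    IsCompleteForestPartition ⊤ k (outStar T) := by
  refine ⟨fun i ↦ ?_, fun i j hij ↦ ?_, ?_, isAcyclic_fromEdgeSet_outStar,
    fun i j ↦ not_isAcyclic_fromEdgeSet_outStar_union hasymm htotal hcommon⟩
  · obtain ⟨r, hir, -⟩ := hcommon i i
    exact ⟨s(i, r), r, hir, rfl⟩
  · rw [Set.disjoint_left]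
    rintro _ ⟨v, hiv, rfl⟩ ⟨w, hjw, he⟩
    obtain ⟨rfl, -⟩ | ⟨rfl, rfl⟩ := Sym2.eq_iff.mp he
    · exact hij rfl
    · exact hasymm _ _ hiv hjw
  · ext e
    induction e with | h v w
    simp only [Set.mem_iUnion, mem_edgeSet, top_adj]
    constructor
    · rintro ⟨i, j, hij, he⟩ rfl
      obtain ⟨rfl, rfl⟩ : v = i ∧ v = j := by simpa [and_comm] using he
      exact hasymm _ _ hij hij
    · intro hvw
      exact (htotal v w hvw).elim (⟨v, w, ·, rfl⟩) (⟨w, v, ·, Sym2.eq_swap⟩)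

end OutStars

/-- The Paley tournament: `{1, 2, 4}` is the set of nonzero squares modulo `7`, and every nonzero
residue is a difference of two of its elements. -/
theorem exists_isCompleteForestPartition_top_seven :
    ∃ P : Fin 7 → Set (Sym2 (Fin 7)), IsCompleteForestPartition ⊤ 7 P :=
  ⟨outStar fun i j ↦ j - i ∈ ({1, 2, 4} : Finset (Fin 7)),
    isCompleteForestPartition_outStar (by decide) (by decide) (by decide)⟩

/-- The achromatic arboricity of `K_7` equals `7`. -/
theorem achromaticArboricity_K7 :
    achromaticArboricity (⊤ : SimpleGraph (Fin 7)) = 7 := by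
  have hmem : 7 ∈ {k | ∃ P : Fin k → Set (Sym2 (Fin 7)), IsCompleteForestPartition ⊤ k P} :=
    exists_isCompleteForestPartition_top_seven
  refine IsGreatest.csSup_eq ⟨hmem, ?_⟩
  rintro k ⟨P, hP⟩
  simpa using hP.isCompleteForestDecomposition.card_le_seven (Fintype.card_fin 7)
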